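/- (Reward preservation in isotopic class lumping.) Let (S, p, μ, r) be a finite Markov reward process and let C ⊆ S be a nonempty subset such that r is constant on C and p(y | x) = p(y | x') for all x, x' ∈ C and all y ∉ C (an isotopic class). Fix c₀ ∈ C and let c : S → S be the map sending every element of C to c₀ and fixing every state outside C. Define the lumped Markov reward process on S' = {x : S // x ∉ C ∨ x = c₀} with initial distribution μ' = PMF.map c μ, kernel p'(x) = PMF.map c (p x.val), and reward r'(x) = r(x.val). Then for every horizon N ≥ 1, the joint law of the reward sequence (r(X₁), …, r(X_N)) of the original chain equals the joint law of (r'(X'₁), …, r'(X'_N)) of the lumped chain. -/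

import Mathlib

/-!
The collapse map `c` is a strong lumping: the law of `c(X₂)` given `X₁ = x` depends on `x` only
through `c x`. For `x ∈ C` the pushforwards of `p x` and `p c₀` under `c` agree at every state
outside `C` by the isotopy condition, hence also at `c₀`, since both have total mass one
(`map_collapseClass_eq_of_mem`). By induction on the horizon the lumped chain therefore has the
law of the original trajectory pushed forward coordinatewise under `c` (`map_traj_of_lumpable`),
and `r ∘ c = r` because `r` is constant on `C`.
-/

noncomputable section

open scoped Classical

/-- The joint law `Traj_{n+1}(μ, p)` of the first `n+1` states of a Markov chain with
initial distribution `μ` and transition kernel `p`, defined by iterated `PMF.bind`. -/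
def traj {S : Type} (p : S → PMF S) (μ : PMF S) : (n : ℕ) → PMF (Fin (n + 1) → S)
  | 0 => μ.map fun x => fun _ => x
  | n + 1 => (traj p μ n).bind fun f => (p (f (Fin.last n))).map fun y => Fin.snoc f y

/-- The collapse map for an isotopic class: it sends every element of `C` to the chosen
representative `c₀ ∈ C` and fixes every state outside `C`, landing in the lumped state
space `S' = {s : S // s ∉ C ∨ s = c₀}`. -/
def collapseClass {S : Type} (C : Set S) (c₀ : S) (x : S) :
    {s : S // s ∉ C ∨ s = c₀} :=
  if h : x ∈ C then ⟨c₀, Or.inr rfl⟩ else ⟨x, Or.inl h⟩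

/-- The lumped kernel on `S' = {s : S // s ∉ C ∨ s = c₀}`. -/
def lumpedClassKernel {S : Type} (p : S → PMF S) (C : Set S) (c₀ : S) :
    {s : S // s ∉ C ∨ s = c₀} → PMF {s : S // s ∉ C ∨ s = c₀} :=
  fun x => PMF.map (collapseClass C c₀) (p x.val)

/-- Two probability mass functions that agree off a single point are equal. -/
theorem pmf_eq_of_eq_off_point {T : Type} (q q' : PMF T) (a : T)
    (h : ∀ b, b ≠ a → q b = q' b) : q = q' := by
  ext b
  by_cases hb : b = a
  · subst hb
    have h₁ := q.tsum_coe
    have h₂ := q'.tsum_coe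
    rw [ENNReal.tsum_eq_add_tsum_ite b] at h₁ h₂
    have htail : (∑' x, if x = b then 0 else q x) = ∑' x, if x = b then 0 else q' x := by
      refine tsum_congr fun x => ?_
      split_ifs with hx
      · rfl
      · exact h x hx
    rw [htail] at h₁
    have hfin : (∑' x, if x = b then 0 else q' x) ≠ ⊤ := by
      intro htop
      rw [htop] at h₂
      simp at h₂
    exact (ENNReal.add_left_inj hfin).1 (h₁.trans h₂.symm)
  · exact h b hb

theorem collapseClass_of_mem {S : Type} {C : Set S} {c₀ x : S} (hx : x ∈ C) :
    collapseClass C c₀ x = ⟨c₀, Or.inr rfl⟩ := dif_pos hx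

theorem collapseClass_of_notMem {S : Type} {C : Set S} {c₀ x : S} (hx : x ∉ C) :
    collapseClass C c₀ x = ⟨x, Or.inl hx⟩ := dif_neg hx

/-- The fibre of the collapse map over a state outside `C` is a singleton. -/
theorem map_collapseClass_apply_of_notMem {S : Type} {C : Set S} {c₀ y : S} (hc₀ : c₀ ∈ C)
    (hy : y ∉ C) (q : PMF S) :
    PMF.map (collapseClass C c₀) q ⟨y, Or.inl hy⟩ = q y := by
  rw [PMF.map_apply, tsum_eq_single y]
  · rw [collapseClass_of_notMem hy, if_pos rfl]
  · intro z hz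
    refine if_neg fun h => ?_
    by_cases hzC : z ∈ C
    · rw [collapseClass_of_mem hzC, Subtype.mk.injEq] at h
      exact hy (h ▸ hc₀)
    · rw [collapseClass_of_notMem hzC, Subtype.mk.injEq] at h
      exact hz h.symm

theorem map_collapseClass_eq_of_mem {S : Type} {p : S → PMF S} {C : Set S} {c₀ : S}
    (hc₀ : c₀ ∈ C) (hp : ∀ x ∈ C, ∀ x' ∈ C, ∀ y ∉ C, p x y = p x' y) {x : S} (hx : x ∈ C) :
    PMF.map (collapseClass C c₀) (p x) = PMF.map (collapseClass C c₀) (p c₀) := by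
  refine pmf_eq_of_eq_off_point _ _ ⟨c₀, Or.inr rfl⟩ ?_
  rintro ⟨y, hy⟩ hne
  have hyC : y ∉ C := hy.resolve_right fun h => hne (Subtype.ext h)
  rw [map_collapseClass_apply_of_notMem hc₀ hyC, map_collapseClass_apply_of_notMem hc₀ hyC]
  exact hp x hx c₀ hc₀ y hyC

/-- Strong lumpability for a general state map `c`: if `c` intertwines the kernels `p` and `p'`,
then it pushes the trajectory law of `p` forward to that of `p'`. -/
theorem map_traj_of_lumpable {S T : Type} (p : S → PMF S) (p' : T → PMF T) (c : S → T)
    (h : ∀ x, p' (c x) = PMF.map c (p x)) (μ : PMF S) (n : ℕ) :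
    PMF.map (fun f => c ∘ f) (traj p μ n) = traj p' (PMF.map c μ) n := by
  induction n with
  | zero => simp only [traj, PMF.map_comp]; rfl
  | succ n ih =>
    simp only [traj]
    rw [← ih, PMF.map_bind, PMF.bind_map]
    congr 1
    funext f
    simp only [Function.comp_apply, h, PMF.map_comp]
    congr 1
    funext y
    exact Fin.comp_snoc c f y

/-- reward preservation in isotopic class lumping: if `C` is a nonempty
isotopic class (the reward `r` is constant on `C` and all states of `C` have the same
transition probability to every state outside `C`) with representative `c₀ ∈ C`, then
for every horizon `N = n + 1 ≥ 1` the joint law of the reward sequence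
`(r(X₁), …, r(X_N))` of the original chain equals that of the lumped chain. -/
theorem sat_isotopic_class_lumping_reward_sequence_law
    {S : Type} [Fintype S] [Nonempty S]
    (p : S → PMF S) (μ : PMF S) (r : S → ℝ)
    (C : Set S) (hC : C.Nonempty)
    (hr : ∀ x ∈ C, ∀ x' ∈ C, r x = r x')
    (hp : ∀ x ∈ C, ∀ x' ∈ C, ∀ y ∉ C, p x y = p x' y)
    (c₀ : S) (hc₀ : c₀ ∈ C) :
    ∀ n : ℕ,
      PMF.map (fun f => fun i : Fin (n + 1) => r (f i)) (traj p μ n)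
        = PMF.map (fun f => fun i : Fin (n + 1) => r (f i).val)
            (traj (lumpedClassKernel p C c₀) (PMF.map (collapseClass C c₀) μ) n) := by
  intro n
  have hk : ∀ x, lumpedClassKernel p C c₀ (collapseClass C c₀ x)
      = PMF.map (collapseClass C c₀) (p x) := by
    intro x
    by_cases hx : x ∈ C
    · rw [collapseClass_of_mem hx]
      exact (map_collapseClass_eq_of_mem hc₀ hp hx).symm
    · rw [collapseClass_of_notMem hx]
      rfl
  have hrc : ∀ x, r (collapseClass C c₀ x).val = r x := by
    intro x
    by_cases hx : x ∈ C
    · rw [collapseClass_of_mem hx]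
      exact hr c₀ hc₀ x hx
    · rw [collapseClass_of_notMem hx]
  rw [← map_traj_of_lumpable p _ _ hk μ n, PMF.map_comp]
  congr 1
  funext f i
  exact (hrc (f i)).symm
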